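/- arXiv:2406.10605 — 5 statements merged into one kernel-verified Lean document; each statement's English description precedes it below -/
import Mathlib

section
/- Consider OMWU with step size η > 0 in the 2-periodic matching-pennies game (encoded by sequences a, b as in the context). Assume a(0) ≠ 1/2 and b(0) ≠ 1/2, set p = (1/2)·min(|a(0) − 1/2|, |b(0) − 1/2|), and assume p < 1/4 and 16·√η ≤ p. Then the KL-divergence to the equilibrium diverges: D(t) → +∞ as t → ∞. -/
/-- KL-divergence from the uniform strategy `(1/2, 1/2)` to `(x, 1-x)`. -/
noncomputable def KLhalf (x : ℝ) : ℝ :=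
  (1/2) * Real.log (1/(2*x)) + (1/2) * Real.log (1/(2*(1-x)))

/-- OMWU dynamics with step size `η` in the 2-periodic matching-pennies game:
`a t` is the probability player 1 assigns to its first strategy at time `t`,
`b t` that of player 2. -/
def OMWU (η : ℝ) (a b : ℤ → ℝ) : Prop :=
  (∀ t : ℤ, -1 ≤ t → (0 < a t ∧ a t < 1) ∧ (0 < b t ∧ b t < 1)) ∧
  (∀ t : ℤ, 0 ≤ t → Even t →
    (a (t+1) = a t * Real.exp (-(2*η)*(1 - b t) - η*(1 - b (t-1))) /
      (a t * Real.exp (-(2*η)*(1 - b t) - η*(1 - b (t-1)))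
        + (1 - a t) * Real.exp (-(2*η)*(b t) - η*(b (t-1)))) ∧
    b (t+1) = b t * Real.exp ((2*η)*(1 - a t) + η*(1 - a (t-1))) /
      (b t * Real.exp ((2*η)*(1 - a t) + η*(1 - a (t-1)))
        + (1 - b t) * Real.exp ((2*η)*(a t) + η*(a (t-1)))))) ∧
  (∀ t : ℤ, 0 ≤ t → Odd t →
    (a (t+1) = a t * Real.exp ((2*η)*(1 - b t) + η*(1 - b (t-1))) /
      (a t * Real.exp ((2*η)*(1 - b t) + η*(1 - b (t-1)))
        + (1 - a t) * Real.exp ((2*η)*(b t) + η*(b (t-1)))) ∧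
    b (t+1) = b t * Real.exp (-(2*η)*(1 - a t) - η*(1 - a (t-1))) /
      (b t * Real.exp (-(2*η)*(1 - a t) - η*(1 - a (t-1)))
        + (1 - b t) * Real.exp (-(2*η)*(a t) - η*(a (t-1))))))


noncomputable def ff (x : ℝ) : ℝ := (Real.exp x - 1) / (Real.exp x + 1)

lemma ff_eq (x : ℝ) : ff x = 1 - 2 / (Real.exp x + 1) := by
  have := Real.exp_pos x
  unfold ff
  field_simp
  ring

lemma ff_neg (x : ℝ) : ff (-x) = - ff x := by
  have := Real.exp_pos x
  unfold ff
  rw [Real.exp_neg]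
  field_simp
  ring

lemma ff_mono {x y : ℝ} (h : x ≤ y) : ff x ≤ ff y := by
  rw [ff_eq, ff_eq]
  have := Real.exp_pos x
  have := Real.exp_le_exp.2 h
  gcongr

lemma ff_abs (x : ℝ) : |ff x| ≤ 1 := by
  have := Real.exp_pos x
  unfold ff
  rw [abs_div, abs_of_pos (by linarith : (0:ℝ) < Real.exp x + 1), div_le_one (by linarith), abs_le]
  constructor <;> linarith

lemma ff_lip0 {x y : ℝ} (h : y ≤ x) : ff x - ff y ≤ 2 * (x - y) := by
  rw [ff_eq, ff_eq]
  have hX := Real.exp_pos x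
  have hY := Real.exp_pos y
  have h1 : Real.exp y = Real.exp x * Real.exp (y - x) := by rw [← Real.exp_add]; congr 1; ring
  have h2 := Real.add_one_le_exp (y - x)
  have h3 : Real.exp x - Real.exp y ≤ Real.exp x * (x - y) := by
    rw [h1]; nlinarith
  have e : 1 - 2 / (Real.exp x + 1) - (1 - 2 / (Real.exp y + 1))
      = 2 * (Real.exp x - Real.exp y) / ((Real.exp x + 1) * (Real.exp y + 1)) := by
    field_simp
    ring
  rw [e, div_le_iff₀ (by positivity)]
  have h4 : 0 ≤ x - y := by linarith
  have h5 : 0 ≤ (x - y) * (Real.exp y * (Real.exp x + 1) + 1) := by positivity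
  nlinarith

lemma ff_lip (x y : ℝ) : |ff x - ff y| ≤ 2 * |x - y| := by
  rcases le_total y x with h | h
  · rw [abs_of_nonneg (sub_nonneg.2 (ff_mono h)), abs_of_nonneg (sub_nonneg.2 h)]
    exact ff_lip0 h
  · rw [abs_sub_comm, abs_sub_comm x y, abs_of_nonneg (sub_nonneg.2 (ff_mono h)),
      abs_of_nonneg (sub_nonneg.2 h)]
    exact ff_lip0 h

lemma key (v d d2 : ℝ) (hd : 0 < d) (hd1 : d ≤ 1/10) (h2 : d2 ≤ 5/4 * d) :
    d / 16 * Real.exp (-|v|) ≤ ff v + ff (v - d2) - 2 * ff (v - d) := by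
  have hm : ff (v - 5/4*d) ≤ ff (v - d2) := ff_mono (by linarith)
  refine le_trans ?_ (by linarith : ff v + ff (v - 5/4*d) - 2 * ff (v - d) ≤ _)
  have key1 : ∀ x, ff x = 1 - 2 * Real.exp (-x) / (1 + Real.exp (-x)) := by
    intro x
    have := Real.exp_pos x
    unfold ff
    rw [Real.exp_neg]
    field_simp
    ring
  rw [key1, key1, key1]
  have e1 : Real.exp (-(v - 5/4*d)) = Real.exp (-v) * Real.exp (5/4*d) := by
    rw [← Real.exp_add]; congr 1; ring
  have e2 : Real.exp (-(v - d)) = Real.exp (-v) * Real.exp d := by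
    rw [← Real.exp_add]; congr 1; ring
  rw [e1, e2]
  have hE := Real.exp_pos (-v)
  have hr := Real.add_one_le_exp d
  have hs0 := Real.add_one_le_exp (5/4*d)
  have hs := Real.abs_exp_sub_one_sub_id_le (x := 5/4*d) (by rw [abs_le]; constructor <;> linarith)
  have hr' := Real.abs_exp_sub_one_sub_id_le (x := d) (by rw [abs_le]; constructor <;> linarith)
  have hs := (abs_le.1 hs).2
  have hr' := (abs_le.1 hr').2
  have hrs : Real.exp d ≤ Real.exp (5/4*d) := Real.exp_le_exp.2 (by linarith)
  have hEE : Real.exp (-|v|) * (1 + Real.exp (-v))^2 ≤ 4 * Real.exp (-v) := by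
    rcases le_total 0 v with h | h
    · rw [abs_of_nonneg h]
      have : Real.exp (-v) ≤ 1 := Real.exp_le_one_iff.2 (by linarith)
      have : (1 + Real.exp (-v))^2 ≤ 4 := by nlinarith
      nlinarith
    · rw [abs_of_nonpos h]
      have h1 : 1 ≤ Real.exp (-v) := Real.one_le_exp_iff.2 (by linarith)
      have h3 : Real.exp (- -v) * Real.exp (-v) = 1 := by rw [← Real.exp_add]; simp
      have : (1 + Real.exp (-v))^2 ≤ 4 * Real.exp (-v)^2 := by nlinarith
      have h5 := mul_le_mul_of_nonneg_left this (Real.exp_pos (- -v)).le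
      have h6 : Real.exp (- -v) * (4 * Real.exp (-v)^2)
        = 4 * Real.exp (-v) * (Real.exp (- -v) * Real.exp (-v)) := by ring
      rw [h6, h3] at h5
      linarith
  generalize Real.exp (-v) = E at *
  generalize Real.exp d = r at *
  generalize Real.exp (5/4*d) = s at *
  have hr2 : r ≤ 2 := by nlinarith
  have hmain : d / 4 ≤ 2 * r - 1 - s := by nlinarith
  have hr0 : 1 ≤ r := by linarith
  have hs1 : 1 ≤ s := by linarith
  have c1 : 2 * E * (2 * r - 1 - s) / ((1 + E) * (1 + E * r)) ≤
      1 - 2 * E / (1 + E) + (1 - 2 * (E * s) / (1 + E * s)) - 2 * (1 - 2 * (E * r) / (1 + E * r)) := by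
    have : 1 - 2 * E / (1 + E) + (1 - 2 * (E * s) / (1 + E * s)) - 2 * (1 - 2 * (E * r) / (1 + E * r))
      = 2 * E * (r - 1) / ((1 + E) * (1 + E * r)) - 2 * E * (s - r) / ((1 + E * s) * (1 + E * r)) := by
      field_simp
      ring
    rw [this]
    have h7 : 2 * E * (s - r) / ((1 + E * s) * (1 + E * r)) ≤ 2 * E * (s - r) / ((1 + E) * (1 + E * r)) := by
      have : 0 ≤ s - r := by linarith
      have : E ≤ E * s := by nlinarith
      gcongr
    have h8 : 2 * E * (2 * r - 1 - s) / ((1 + E) * (1 + E * r)) =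
       2 * E * (r - 1) / ((1 + E) * (1 + E * r)) - 2 * E * (s - r) / ((1 + E) * (1 + E * r)) := by
      rw [← sub_div]; congr 1; ring
    linarith
  refine le_trans ?_ c1
  rw [le_div_iff₀ (by positivity)]
  have h9 : (1 + E) * (1 + E * r) ≤ 2 * (1 + E)^2 := by nlinarith [mul_pos hE hE]
  have h10 : 0 ≤ d / 16 * Real.exp (-|v|) := by positivity
  calc _ ≤ d / 16 * Real.exp (-|v|) * (2 * (1 + E)^2) := mul_le_mul_of_nonneg_left h9 h10
    _ = d / 8 * (Real.exp (-|v|) * (1 + E)^2) := by ring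
    _ ≤ d / 8 * (4 * E) := mul_le_mul_of_nonneg_left hEE (by positivity)
    _ = 2 * E * (d / 4) := by ring
    _ ≤ _ := mul_le_mul_of_nonneg_left hmain (by positivity)

/-- recurrences -/
def Rec (η : ℝ) (u v : ℕ → ℝ) : Prop :=
  (∀ k, u (2*k+2) = u (2*k+1) - 2*η*ff (v (2*k+1)) - η*ff (v (2*k)) ∧
        v (2*k+2) = v (2*k+1) + 2*η*ff (u (2*k+1)) + η*ff (u (2*k))) ∧
  (∀ k, u (2*k+3) = u (2*k+2) + 2*η*ff (v (2*k+2)) + η*ff (v (2*k+1)) ∧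
        v (2*k+3) = v (2*k+2) - 2*η*ff (u (2*k+2)) - η*ff (u (2*k+1))) ∧
  |u 1 - u 0| ≤ 3*η ∧ |v 1 - v 0| ≤ 3*η

lemma Rec.rot {η : ℝ} {u v : ℕ → ℝ} (h : Rec η u v) : Rec η v (fun n => - u n) := by
  obtain ⟨h1, h2, h3, h4⟩ := h
  refine ⟨fun k => ?_, fun k => ?_, h4, ?_⟩
  · obtain ⟨e1, e2⟩ := h1 k
    simp only [ff_neg]
    constructor <;> linarith
  · obtain ⟨e1, e2⟩ := h2 k
    simp only [ff_neg]
    constructor <;> linarith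
  · rw [abs_sub_comm]
    convert h3 using 2
    ring

lemma Rec.step {η : ℝ} {u v : ℕ → ℝ} (hη : 0 < η) (h : Rec η u v) (n : ℕ) :
    |u (n+1) - u n| ≤ 3*η ∧ |v (n+1) - v n| ≤ 3*η := by
  obtain ⟨h1, h2, h3, h4⟩ := h
  have aux : ∀ x, -η ≤ η * ff x ∧ η * ff x ≤ η := by
    intro x
    have := abs_le.1 (ff_abs x)
    constructor <;> nlinarith
  rcases Nat.even_or_odd' n with ⟨k, rfl | rfl⟩
  · rcases k with _ | k
    · exact ⟨h3, h4⟩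
    · obtain ⟨e1, e2⟩ := h2 k
      have a1 := aux (v (2*k+2))
      have a2 := aux (v (2*k+1))
      have a3 := aux (u (2*k+2))
      have a4 := aux (u (2*k+1))
      rw [show 2*(k+1)+1 = 2*k+3 by ring, show 2*(k+1) = 2*k+2 by ring, e1, e2]
      constructor <;> rw [abs_le] <;> constructor <;> linarith
  · obtain ⟨e1, e2⟩ := h1 k
    have a1 := aux (v (2*k))
    have a2 := aux (v (2*k+1))
    have a3 := aux (u (2*k))
    have a4 := aux (u (2*k+1))
    rw [show 2*k+1+1 = 2*k+2 by ring, e1, e2]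
    constructor <;> rw [abs_le] <;> constructor <;> linarith

/-- One half of the two-step growth. -/
lemma delta_bounds {η : ℝ} (hη : 0 < η) (hη1 : η ≤ 1/1000) {w : ℕ → ℝ}
    (hs : ∀ n, |w (n+1) - w n| ≤ 3*η) (n : ℕ) (hw : 30*η ≤ ff (w (n+2))) :
    60*η^2 ≤ 2*η*ff (w (n+2)) + η*ff (w (n+1)) ∧
    2*η*ff (w (n+2)) + η*ff (w (n+1)) ≤ 1/10 ∧
    2*η*ff (w (n+1)) + η*ff (w n) ≤ 5/4 * (2*η*ff (w (n+2)) + η*ff (w (n+1))) := by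
  have l1 := abs_le.1 ((ff_lip (w (n+1)) (w n)).trans (by linarith [hs n] : _ ≤ 6*η))
  have l2 := abs_le.1 ((ff_lip (w (n+2)) (w (n+1))).trans (by linarith [hs (n+1)] : _ ≤ 6*η))
  have b1 := abs_le.1 (ff_abs (w (n+2)))
  have b2 := abs_le.1 (ff_abs (w (n+1)))
  generalize ff (w (n+2)) = x at *
  generalize ff (w (n+1)) = y at *
  generalize ff (w n) = z at *
  refine ⟨?_, ?_, ?_⟩
  · nlinarith
  · nlinarith
  · have : 2 * y + z ≤ 5/4 * (2 * x + y) := by linarith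
    nlinarith

lemma grow {η : ℝ} (hη : 0 < η) (hη1 : η ≤ 1/1000) {u v : ℕ → ℝ} (h : Rec η u v) (k : ℕ)
    (hu : 30*η ≤ ff (u (2*k+2))) (hv : 30*η ≤ ff (v (2*k+2))) :
    u (2*k+2) + 3*η^3 * Real.exp (-|v (2*k+2)|) ≤ u (2*k+4) ∧
    v (2*k+2) + 3*η^3 * Real.exp (-|u (2*k+2)|) ≤ v (2*k+4) := by
  have hs := h.step hη
  obtain ⟨h1, h2, -, -⟩ := h
  obtain ⟨a1, a2, a3⟩ := delta_bounds hη hη1 (fun n => (hs n).1) (2*k) hu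
  obtain ⟨b1, b2, b3⟩ := delta_bounds hη hη1 (fun n => (hs n).2) (2*k) hv
  obtain ⟨p1, p2⟩ := h1 k
  obtain ⟨q1, q2⟩ := h2 k
  obtain ⟨r1, r2⟩ := h1 (k+1)
  rw [show 2*(k+1)+2 = 2*k+4 by ring, show 2*(k+1)+1 = 2*k+3 by ring,
    show 2*(k+1) = 2*k+2 by ring] at r1 r2
  have hη2 : 0 < 60 * η^2 := by positivity
  have K1 := key (v (2*k+2)) _ _ (by linarith) a2 a3
  have K2 := key (-u (2*k+2)) _ _ (by linarith) b2 b3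
  rw [show v (2*k+2) - (2*η*ff (u (2*k+1)) + η*ff (u (2*k))) = v (2*k+1) by linarith,
    show v (2*k+2) - (2*η*ff (u (2*k+2)) + η*ff (u (2*k+1))) = v (2*k+3) by linarith] at K1
  rw [show -u (2*k+2) - (2*η*ff (v (2*k+1)) + η*ff (v (2*k))) = -u (2*k+1) by linarith,
    show -u (2*k+2) - (2*η*ff (v (2*k+2)) + η*ff (v (2*k+1))) = -u (2*k+3) by linarith,
    abs_neg, ff_neg, ff_neg, ff_neg] at K2
  have E1 := Real.exp_pos (-|v (2*k+2)|)
  have E2 := Real.exp_pos (-|u (2*k+2)|)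
  have M1 : 3*η^2 * Real.exp (-|v (2*k+2)|) ≤
     ff (v (2*k+2)) + ff (v (2*k+1)) - 2 * ff (v (2*k+3)) :=
    le_trans (mul_le_mul_of_nonneg_right (by linarith) E1.le) K1
  have M2 : 3*η^2 * Real.exp (-|u (2*k+2)|) ≤
     -ff (u (2*k+2)) + -ff (u (2*k+1)) - 2 * -ff (u (2*k+3)) :=
    le_trans (mul_le_mul_of_nonneg_right (by linarith) E2.le) K2
  have N1 := mul_le_mul_of_nonneg_left M1 hη.le
  have N2 := mul_le_mul_of_nonneg_left M2 hη.le
  constructor <;> linarith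

lemma core {η : ℝ} (hη : 0 < η) (hη1 : η ≤ 1/1000) {u v : ℕ → ℝ} (h : Rec η u v)
    (hu : 100*η ≤ ff (u 0)) (hv : 100*η ≤ ff (v 0)) (M : ℝ) :
    ∃ N, ∀ n ≥ N, M ≤ |u n| + |v n| := by
  have hs := h.step hη
  have init : ∀ w : ℕ → ℝ, (∀ n, |w (n+1) - w n| ≤ 3*η) → 100*η ≤ ff (w 0) → 30*η ≤ ff (w 2) := by
    intro w hw h0
    have l1 := abs_le.1 ((ff_lip (w 1) (w 0)).trans (by linarith [hw 0] : _ ≤ 6*η))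
    have l2 := abs_le.1 ((ff_lip (w 2) (w 1)).trans (by linarith [hw 1] : _ ≤ 6*η))
    linarith
  have inv : ∀ k, 30*η ≤ ff (u (2*k+2)) ∧ 30*η ≤ ff (v (2*k+2)) := by
    intro k
    induction k with
    | zero => exact ⟨init u (fun n => (hs n).1) hu, init v (fun n => (hs n).2) hv⟩
    | succ k ih =>
      obtain ⟨g1, g2⟩ := grow hη hη1 h k ih.1 ih.2
      have E1 : 0 ≤ 3*η^3 * Real.exp (-|v (2*k+2)|) := by positivity
      have E2 : 0 ≤ 3*η^3 * Real.exp (-|u (2*k+2)|) := by positivity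
      exact ⟨ih.1.trans (ff_mono (by rw [show 2*(k+1)+2 = 2*k+4 by ring]; linarith)),
        ih.2.trans (ff_mono (by rw [show 2*(k+1)+2 = 2*k+4 by ring]; linarith))⟩
  have pos : ∀ x, 30*η ≤ ff x → 0 ≤ x := by
    intro x hx
    by_contra hc
    have := ff_mono (le_of_not_ge hc)
    have h0 : ff 0 = 0 := by simp [ff]
    linarith
  have mono : Monotone (fun k => u (2*k+2) + v (2*k+2)) := by
    refine monotone_nat_of_le_succ fun k => ?_
    obtain ⟨g1, g2⟩ := grow hη hη1 h k (inv k).1 (inv k).2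
    have E1 : 0 ≤ 3*η^3 * Real.exp (-|v (2*k+2)|) := by positivity
    have E2 : 0 ≤ 3*η^3 * Real.exp (-|u (2*k+2)|) := by positivity
    simp only [show 2*(k+1)+2 = 2*k+4 by ring]
    linarith
  have unb : ∃ k, M + 6*η ≤ u (2*k+2) + v (2*k+2) := by
    by_contra! hc
    set L := M + 6*η
    have hlin : ∀ k : ℕ, k * (3*η^3*Real.exp (-L)) ≤ u (2*k+2) := by
      intro k
      induction k with
      | zero => simpa using pos _ (inv 0).1
      | succ k ih =>
        obtain ⟨g1, g2⟩ := grow hη hη1 h k (inv k).1 (inv k).2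
        have pu := pos _ (inv k).1
        have pv := pos _ (inv k).2
        have : Real.exp (-L) ≤ Real.exp (-|v (2*k+2)|) := by
          apply Real.exp_le_exp.2
          rw [abs_of_nonneg pv]
          linarith [hc k]
        have : 3*η^3*Real.exp (-L) ≤ 3*η^3*Real.exp (-|v (2*k+2)|) :=
          mul_le_mul_of_nonneg_left this (by positivity)
        rw [show 2*(k+1)+2 = 2*k+4 by ring]
        push_cast
        linarith
    obtain ⟨k, hk⟩ := exists_nat_gt (L / (3*η^3*Real.exp (-L)))
    rw [div_lt_iff₀ (by positivity)] at hk
    linarith [hlin k, hc k, pos _ (inv k).2]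
  obtain ⟨K, hK⟩ := unb
  refine ⟨2*K+2, fun n hn => ?_⟩
  have : ∃ k, K ≤ k ∧ (n = 2*k+2 ∨ n = 2*k+2+1) := ⟨(n-2)/2, by omega, by omega⟩
  obtain ⟨k, hk, rfl | rfl⟩ := this
  · have := mono hk
    simp only at this
    linarith [le_abs_self (u (2*k+2)), le_abs_self (v (2*k+2))]
  · have := mono hk
    simp only at this
    have s1 := abs_le.1 (hs (2*k+2)).1
    have s2 := abs_le.1 (hs (2*k+2)).2
    linarith [le_abs_self (u (2*k+2+1)), le_abs_self (v (2*k+2+1))]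

lemma core' {η : ℝ} (hη : 0 < η) (hη1 : η ≤ 1/1000) {u v : ℕ → ℝ} (h : Rec η u v)
    (hu : 100*η ≤ |ff (u 0)|) (hv : 100*η ≤ |ff (v 0)|) (M : ℝ) :
    ∃ N, ∀ n ≥ N, M ≤ |u n| + |v n| := by
  rcases le_abs.1 hu with hu | hu <;> rcases le_abs.1 hv with hv | hv
  · exact core hη hη1 h hu hv M
  · obtain ⟨N, hN⟩ := core hη hη1 h.rot.rot.rot (by simpa [ff_neg] using hv) (by simpa [ff_neg] using hu) M
    refine ⟨N, fun n hn => ?_⟩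
    have := hN n hn
    simp only [abs_neg] at this
    linarith
  · obtain ⟨N, hN⟩ := core hη hη1 h.rot hv (by simpa [ff_neg] using hu) M
    refine ⟨N, fun n hn => ?_⟩
    have := hN n hn
    simp only [abs_neg] at this
    linarith
  · obtain ⟨N, hN⟩ := core hη hη1 h.rot.rot (by simpa [ff_neg] using hu) (by simpa [ff_neg] using hv) M
    refine ⟨N, fun n hn => ?_⟩
    have := hN n hn
    simp only [abs_neg] at this
    linarith

noncomputable def lg (x : ℝ) : ℝ := Real.log (x / (1 - x))

lemma ff_lg {x : ℝ} (h0 : 0 < x) (h1 : x < 1) : ff (lg x) = 2*x - 1 := by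
  have : 0 < 1 - x := by linarith
  unfold ff lg
  rw [Real.exp_log (by positivity)]
  field_simp
  ring

lemma lg_step {x y A B : ℝ} (h0 : 0 < x) (h1 : x < 1)
    (hy : y = x * Real.exp A / (x * Real.exp A + (1 - x) * Real.exp B)) :
    lg y = lg x + A - B := by
  have h2 : 0 < 1 - x := by linarith
  have hA := Real.exp_pos A
  have hB := Real.exp_pos B
  have hd : 0 < x * Real.exp A + (1 - x) * Real.exp B := by positivity
  have e : y / (1 - y) = x / (1 - x) * (Real.exp A / Real.exp B) := by
    have : 1 - y = (1 - x) * Real.exp B / (x * Real.exp A + (1 - x) * Real.exp B) := by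
      rw [hy]; field_simp; ring
    rw [this, hy]
    field_simp
  unfold lg
  rw [e, Real.log_mul (by positivity) (by positivity), Real.log_div hA.ne' hB.ne',
    Real.log_exp, Real.log_exp]
  ring

lemma kl_lower {x : ℝ} (h0 : 0 < x) (h1 : x < 1) :
    |lg x| / 2 - Real.log 2 ≤ KLhalf x := by
  have h2 : 0 < 1 - x := by linarith
  unfold KLhalf lg
  rw [one_div (2*x), one_div (2*(1-x)), Real.log_inv, Real.log_inv, Real.log_mul (by norm_num) h0.ne',
    Real.log_mul (by norm_num) h2.ne', Real.log_div h0.ne' h2.ne']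
  have := Real.log_nonpos h0.le h1.le
  have := Real.log_nonpos h2.le (by linarith)
  rcases abs_cases (Real.log x - Real.log (1 - x)) with ⟨h, _⟩ | ⟨h, _⟩ <;> rw [h] <;> linarith

lemma rec_of_omwu {η : ℝ} (hη : 0 < η) {a b : ℤ → ℝ} (h : OMWU η a b) :
    Rec η (fun n : ℕ => lg (a n)) (fun n : ℕ => lg (b n)) := by
  obtain ⟨hb, he, ho⟩ := h
  have fa : ∀ n : ℕ, ff (lg (a n)) = 2 * a n - 1 := fun n =>
    ff_lg (hb n (by omega)).1.1 (hb n (by omega)).1.2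
  have fb : ∀ n : ℕ, ff (lg (b n)) = 2 * b n - 1 := fun n =>
    ff_lg (hb n (by omega)).2.1 (hb n (by omega)).2.2
  refine ⟨fun k => ?_, fun k => ?_, ?_⟩
  · simp only [fa, fb]
    obtain ⟨e1, e2⟩ := ho ((2*k+1 : ℕ) : ℤ) (by omega) ⟨k, by push_cast; ring⟩
    have b1 := hb ((2*k+1 : ℕ) : ℤ) (by omega)
    have s1 := lg_step b1.1.1 b1.1.2 e1
    have s2 := lg_step b1.2.1 b1.2.2 e2
    rw [show ((2*k+1 : ℕ) : ℤ) + 1 = ((2*k+2 : ℕ) : ℤ) by push_cast; ring,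
      show ((2*k+1 : ℕ) : ℤ) - 1 = ((2*k : ℕ) : ℤ) by push_cast; ring] at s1 s2
    constructor <;> linarith
  · simp only [fa, fb]
    obtain ⟨e1, e2⟩ := he ((2*k+2 : ℕ) : ℤ) (by omega) ⟨k+1, by push_cast; ring⟩
    have b1 := hb ((2*k+2 : ℕ) : ℤ) (by omega)
    have s1 := lg_step b1.1.1 b1.1.2 e1
    have s2 := lg_step b1.2.1 b1.2.2 e2
    rw [show ((2*k+2 : ℕ) : ℤ) + 1 = ((2*k+3 : ℕ) : ℤ) by push_cast; ring,
      show ((2*k+2 : ℕ) : ℤ) - 1 = ((2*k+1 : ℕ) : ℤ) by push_cast; ring] at s1 s2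
    constructor <;> linarith
  · obtain ⟨e1, e2⟩ := he 0 le_rfl ⟨0, rfl⟩
    have b0 := hb 0 (by norm_num)
    have bm := hb (0 - 1) (by norm_num)
    have s1 := lg_step b0.1.1 b0.1.2 e1
    have s2 := lg_step b0.2.1 b0.2.2 e2
    rw [zero_add] at s1 s2
    obtain ⟨⟨x1, x2⟩, x3, x4⟩ := b0
    obtain ⟨⟨y1, y2⟩, y3, y4⟩ := bm
    simp only [Nat.cast_one, Nat.cast_zero]
    rw [s1, s2]
    constructor <;> rw [abs_le] <;> constructor <;> nlinarith

/-- If OMWU in the 2-periodic matching-pennies game is started at a point with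
`a 0 ≠ 1/2`, `b 0 ≠ 1/2`, with `p = (1/2)·min(|a 0 − 1/2|, |b 0 − 1/2|)` satisfying
`p < 1/4` and `16·√η ≤ p`, then the KL-divergence to the equilibrium diverges. -/
theorem omwu_kl_divergence_tendsto_atTop
    (η : ℝ) (hη : 0 < η) (a b : ℤ → ℝ) (h : OMWU η a b)
    (ha0 : a 0 ≠ 1/2) (hb0 : b 0 ≠ 1/2)
    (p : ℝ) (hpdef : p = (1/2) * min |a 0 - 1/2| |b 0 - 1/2|)
    (hp4 : p < 1/4) (hpη : 16 * Real.sqrt η ≤ p) :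
    Filter.Tendsto (fun t : ℤ => KLhalf (a t) + KLhalf (b t))
      Filter.atTop Filter.atTop := by
  have hsq : 0 < Real.sqrt η := Real.sqrt_pos.2 hη
  have hss : Real.sqrt η * Real.sqrt η = η := Real.mul_self_sqrt hη.le
  have hη1 : η ≤ 1/1000 := by nlinarith
  have hm1 := min_le_left |a 0 - 1/2| |b 0 - 1/2|
  have hm2 := min_le_right |a 0 - 1/2| |b 0 - 1/2|
  have hbig : 100 * η ≤ 4 * p := by nlinarith
  have hb := h.1
  have hR := rec_of_omwu hη h
  have fa : 100 * η ≤ |ff (lg (a (0:ℕ)))| := by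
    have b0 := hb 0 (by norm_num)
    rw [Nat.cast_zero, ff_lg b0.1.1 b0.1.2, show 2 * a 0 - 1 = 2 * (a 0 - 1/2) by ring, abs_mul, abs_two]
    linarith
  have fb : 100 * η ≤ |ff (lg (b (0:ℕ)))| := by
    have b0 := hb 0 (by norm_num)
    rw [Nat.cast_zero, ff_lg b0.2.1 b0.2.2, show 2 * b 0 - 1 = 2 * (b 0 - 1/2) by ring, abs_mul, abs_two]
    linarith
  rw [Filter.tendsto_atTop]
  intro M
  obtain ⟨N, hN⟩ := core' hη hη1 hR fa fb (2 * (M + 2 * Real.log 2))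
  filter_upwards [Filter.eventually_ge_atTop (N : ℤ)] with t ht
  lift t to ℕ using (by omega)
  have hn := hN t (by omega)
  have bt := hb t (by omega)
  linarith [kl_lower bt.1.1 bt.1.2, kl_lower bt.2.1 bt.2.2]
end

section
/- Let η > 0, let u, v ∈ [1/2, 1 − √η], and let w ∈ [0,1]. If (1−v)/v ≥ ((1−u)/u)·e^w, then u − v ≥ (1/2)·w·√η. -/
/-- If `u, v ∈ [1/2, 1 − √η]`, `w ∈ [0,1]` and `(1−v)/v ≥ ((1−u)/u)·e^w`,
then `u − v ≥ (1/2)·w·√η`. -/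
theorem ratio_ineq_lower (η u v w : ℝ) (hη : 0 < η)
    (hu : u ∈ Set.Icc (1/2 : ℝ) (1 - Real.sqrt η))
    (hv : v ∈ Set.Icc (1/2 : ℝ) (1 - Real.sqrt η))
    (hw : w ∈ Set.Icc (0 : ℝ) 1)
    (h : (1 - v) / v ≥ (1 - u) / u * Real.exp w) :
    u - v ≥ (1/2) * w * Real.sqrt η := by
  obtain ⟨hu1, hu2⟩ := hu
  obtain ⟨hv1, hv2⟩ := hv
  obtain ⟨hw1, hw2⟩ := hw
  have hs : 0 < Real.sqrt η := Real.sqrt_pos.mpr hη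
  have hu0 : 0 < u := by linarith
  have hv0 : 0 < v := by linarith
  have he := Real.add_one_le_exp w
  have h1 : (1 - u) * Real.exp w * v ≤ (1 - v) * u := by
    have h2 : (1 - u) * Real.exp w / u ≤ (1 - v) / v := by
      rw [mul_div_right_comm]; exact h
    rwa [div_le_div_iff₀ hu0 hv0] at h2
  have h3 : (1 - u) * v * (w + 1) ≤ (1 - u) * v * Real.exp w :=
    mul_le_mul_of_nonneg_left he (mul_nonneg (by linarith) hv0.le)
  have h4 : Real.sqrt η * (1/2) ≤ (1 - u) * v :=
    mul_le_mul (by linarith) hv1 (by norm_num) (by linarith)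
  have h5 := mul_le_mul_of_nonneg_right h4 hw1
  linarith
end

section
/- Let p ∈ (0, 1/2), let c ≥ 0, and let x₂, x₂' ∈ (0,1) satisfy x₂ − c ≥ x₂' ≥ 1/2 + p. Set x₁ = 1 − x₂ and x₁' = 1 − x₂'. Then KL((1/2,1/2),(x₁,x₂)) − KL((1/2,1/2),(x₁',x₂')) ≥ p·c. -/
/-- KL-divergence from the uniform strategy `(1/2,1/2)` to `(y₁,y₂)`. -/
noncomputable def KL2 (y₁ y₂ : ℝ) : ℝ :=
  (1/2) * Real.log (1/(2*y₁)) + (1/2) * Real.log (1/(2*y₂))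

/-- If `p ∈ (0,1/2)`, `c ≥ 0` and `x₂ − c ≥ x₂' ≥ 1/2 + p` with `x₂, x₂' ∈ (0,1)`,
then the KL-divergence to `(1−x₂, x₂)` exceeds that to `(1−x₂', x₂')` by at least `p·c`. -/
theorem kl_gap_of_closer_to_boundary (p c x₂ x₂' : ℝ)
    (hp : p ∈ Set.Ioo (0 : ℝ) (1/2)) (hc : 0 ≤ c)
    (hx2 : x₂ ∈ Set.Ioo (0 : ℝ) 1) (hx2' : x₂' ∈ Set.Ioo (0 : ℝ) 1)
    (h1 : x₂ - c ≥ x₂') (h2 : x₂' ≥ 1/2 + p) :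
    KL2 (1 - x₂) x₂ - KL2 (1 - x₂') x₂' ≥ p * c := by
  obtain ⟨hp0, hp1⟩ := hp
  obtain ⟨a0, a1⟩ := hx2
  obtain ⟨b0, b1⟩ := hx2'
  have e : ∀ y : ℝ, 0 < y → y < 1 →
      KL2 (1 - y) y = - Real.log 2 - (1/2) * Real.log (y * (1 - y)) := by
    intro y h0 h1
    have h3 : (1 - y) ≠ 0 := by linarith
    unfold KL2
    rw [one_div (2 * (1 - y)), one_div (2 * y), Real.log_inv, Real.log_inv,
      Real.log_mul two_ne_zero h3, Real.log_mul two_ne_zero h0.ne', Real.log_mul h0.ne' h3]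
    ring
  rw [e _ a0 a1, e _ b0 b1]
  have hA : 0 < x₂' * (1 - x₂') := mul_pos b0 (by linarith)
  have hB : 0 < x₂ * (1 - x₂) := mul_pos a0 (by linarith)
  have hl := Real.log_le_sub_one_of_pos (div_pos hB hA)
  rw [Real.log_div hB.ne' hA.ne'] at hl
  have hpc : 0 ≤ p * c := mul_nonneg hp0.le hc
  have hd : x₂ * (1 - x₂) ≤ x₂' * (1 - x₂') - 2 * (p * c) := by
    have := mul_le_mul (show c ≤ x₂ - x₂' by linarith)
      (show 2 * p ≤ x₂ + x₂' - 1 by linarith) (by linarith) (by linarith)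
    nlinarith
  have hA4 : x₂' * (1 - x₂') ≤ 1 := by nlinarith
  have hq : x₂ * (1 - x₂) / (x₂' * (1 - x₂')) ≤ 1 - 2 * (p * c) := by
    rw [div_le_iff₀ hA]
    nlinarith [mul_nonneg hpc (sub_nonneg.2 hA4)]
  linarith
end

section
/- Consider OMWU with step size η > 0 in the 2-periodic matching-pennies game (encoded by sequences a, b as in the context). Let p ∈ (0, 1/4) with 16·√η ≤ p. If 1 − a(0) > 1/2 + 2p and 1 − b(0) > 1/2 + 2p, then for any values of a(−1), b(−1) ∈ (0,1) one has 1 − a(1) > 1/2 + p and 1 − b(1) > 1/2 + p. -/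
theorem omwu_aux (η p x u v : ℝ) (hη : 0 < η) (hp : 0 < p) (hp4 : p < 1/4)
    (hs : 1024 * η ≤ p) (hx0 : 0 < x) (hx1 : x < 1/2 - 2*p) (huv : u - v ≤ 3*η) :
    1 - x * Real.exp u / (x * Real.exp u + (1 - x) * Real.exp v) > 1/2 + p := by
  have hu := Real.exp_pos u
  have hv := Real.exp_pos v
  have hx : 0 < 1 - x := by linarith
  have e1 : Real.exp u * (1 - 3*η) ≤ Real.exp v := by
    have h1 : Real.exp v = Real.exp u * Real.exp (v - u) := by
      rw [← Real.exp_add]; congr 1; ring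
    rw [h1]
    have := Real.add_one_le_exp (v - u)
    exact mul_le_mul_of_nonneg_left (by linarith) hu.le
  have hD : 0 < x * Real.exp u + (1 - x) * Real.exp v := by positivity
  have key : x * Real.exp u / (x * Real.exp u + (1 - x) * Real.exp v) < 1/2 - p := by
    rw [div_lt_iff₀ hD]
    have hc : 0 ≤ (1/2 - p) * (1 - x) := mul_nonneg (by linarith) hx.le
    have hc1 : (1/2 - p) * (1 - x) ≤ 1 := by nlinarith
    have h2 := mul_le_mul_of_nonneg_left e1 hc
    have h3 : x * (1/2 + p) < (1/2 - p) * (1 - x) * (1 - 3*η) := by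
      have := mul_le_mul_of_nonneg_right hc1 hη.le
      nlinarith
    have h4 := mul_lt_mul_of_pos_left h3 hu
    nlinarith
  linarith

/-- If `1 − a 0 > 1/2 + 2p` and `1 − b 0 > 1/2 + 2p` with `p ∈ (0,1/4)` and
`16·√η ≤ p`, then `1 − a 1 > 1/2 + p` and `1 − b 1 > 1/2 + p`. -/
theorem omwu_first_step_bound
    (η : ℝ) (hη : 0 < η) (a b : ℤ → ℝ) (h : OMWU η a b)
    (p : ℝ) (hp : 0 < p) (hp4 : p < 1/4) (hpη : 16 * Real.sqrt η ≤ p)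
    (ha0 : 1 - a 0 > 1/2 + 2*p) (hb0 : 1 - b 0 > 1/2 + 2*p) :
    1 - a 1 > 1/2 + p ∧ 1 - b 1 > 1/2 + p := by
  obtain ⟨hr, he, _⟩ := h
  obtain ⟨⟨a1, a2⟩, b1, b2⟩ := hr 0 (by norm_num)
  obtain ⟨⟨a3, a4⟩, b3, b4⟩ := hr (0 - 1) (by norm_num)
  obtain ⟨h1, h2⟩ := he 0 le_rfl (by simp)
  rw [zero_add] at h1 h2
  have hs : 1024 * η ≤ p := by
    have h0 := Real.sqrt_nonneg η
    have h5 := Real.mul_self_sqrt hη.le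
    nlinarith
  rw [h1, h2]
  constructor
  · refine omwu_aux η p _ _ _ hη hp hp4 hs a1 (by linarith) ?_
    have := mul_pos hη (sub_pos.2 b2)
    have := mul_pos hη (sub_pos.2 b4)
    nlinarith
  · refine omwu_aux η p _ _ _ hη hp hp4 hs b1 (by linarith) ?_
    have := mul_pos hη a1
    have := mul_pos hη a3
    nlinarith
end

section
/- Consider OMWU with step size η > 0 in the 2-periodic matching-pennies game (encoded by sequences a, b as in the context). Let p ∈ (0, 1/4) with 16·√η ≤ p, and assume 1 − a(0) ≥ 1/2 + 2p and 1 − b(0) ≥ 1/2 + 2p. Let t ≥ 3 be an integer, and assume that for every k with −1 ≤ k < t one has 1 − a(k) ≤ 1 − √η and 1 − b(k) ≤ 1 − √η. Then the KL-divergence increases: D(t+2) − D(t) ≥ (3/4)·p²·η³. -/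
open Real in
theorem tanh_mono' {x y : ℝ} (h : x ≤ y) : tanh x ≤ tanh y := by
  have := Real.artanh_le_artanh_iff (x := tanh x) (y := tanh y)
    ⟨neg_one_lt_tanh x, tanh_lt_one x⟩ ⟨neg_one_lt_tanh y, tanh_lt_one y⟩
  rw [artanh_tanh, artanh_tanh] at this
  exact this.1 h

open Real in
theorem tanh_lip {x y : ℝ} (h : x ≤ y) : tanh y - tanh x ≤ y - x := by
  have hd : ∀ x : ℝ, HasDerivAt (fun x => x - sinh x / cosh x)
      (1 - (cosh x * cosh x - sinh x * sinh x) / cosh x ^ 2) x := fun x =>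
    (hasDerivAt_id x).sub ((hasDerivAt_sinh x).div (hasDerivAt_cosh x) (cosh_pos x).ne')
  have hm : Monotone (fun x => x - sinh x / cosh x) := by
    apply monotone_of_deriv_nonneg (fun x => (hd x).differentiableAt)
    intro x
    rw [(hd x).deriv]
    have h1 := cosh_sq x
    have h2 := cosh_pos x
    rw [sub_nonneg, div_le_one (by positivity)]
    nlinarith [sq_nonneg (sinh x)]
  have := hm h
  simp only [tanh_eq_sinh_div_cosh]
  simp only at this
  linarith

open Real in
theorem tanh_abs_lip (x y : ℝ) : |tanh x - tanh y| ≤ |x - y| := by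
  rcases le_total x y with h | h
  · have h1 := tanh_lip h
    have h2 := tanh_mono' h
    rw [abs_of_nonpos (by linarith), abs_of_nonpos (by linarith)]; linarith
  · have h1 := tanh_lip h
    have h2 := tanh_mono' h
    rw [abs_of_nonneg (by linarith), abs_of_nonneg (by linarith)]; linarith

open Real in
theorem tanh_half_le {d : ℝ} (h0 : 0 ≤ d) (h1 : d ≤ 1) : d / 2 ≤ tanh d := by
  have hs : d ≤ sinh d := self_le_sinh_iff.2 h0
  have hc : cosh d ≤ cosh 1 := cosh_le_cosh.2 (by rw [abs_of_nonneg h0]; simpa using h1)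
  have hc2 : cosh 1 ≤ 2 := by
    rw [cosh_eq]
    have := exp_one_lt_d9
    have : exp (-1) ≤ 1 := exp_le_one_iff.2 (by norm_num)
    linarith
  rw [tanh_eq_sinh_div_cosh, div_le_div_iff₀ (by norm_num) (cosh_pos d)]
  nlinarith

open Real in
theorem tanh_shift (z d : ℝ) : 0 < 1 + tanh z * tanh d ∧
    tanh (z + d) - tanh z = tanh d * (1 - tanh z ^ 2) / (1 + tanh z * tanh d) := by
  have h1 := cosh_pos z
  have h2 := cosh_pos d
  have h3 : 0 < cosh (z + d) := cosh_pos _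
  have e : 1 + tanh z * tanh d = cosh (z + d) / (cosh z * cosh d) := by
    rw [cosh_add, tanh_eq_sinh_div_cosh, tanh_eq_sinh_div_cosh]; field_simp
  have hp : 0 < 1 + tanh z * tanh d := by rw [e]; positivity
  refine ⟨hp, ?_⟩
  have e2 : tanh (z + d) * (1 + tanh z * tanh d) = tanh z + tanh d := by
    rw [e, tanh_eq_sinh_div_cosh, tanh_eq_sinh_div_cosh, tanh_eq_sinh_div_cosh, sinh_add]
    field_simp
  rw [eq_div_iff hp.ne', sub_mul, e2]; ring

open Real in
theorem tanh_up {z d : ℝ} (h0 : 0 ≤ d) (h1 : d ≤ 1) :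
    d / 4 * (1 - tanh z ^ 2) ≤ tanh (z + d) - tanh z := by
  obtain ⟨hp, e⟩ := tanh_shift z d
  have h2 := tanh_half_le h0 h1
  have h3 := tanh_lt_one d
  have h4 := tanh_lt_one z
  have h5 := neg_one_lt_tanh z
  have h6 := tanh_sq_lt_one z
  rw [e, le_div_iff₀ hp]
  have h7 : 1 + tanh z * tanh d ≤ 2 := by nlinarith
  have h8 : d / 4 * (1 + tanh z * tanh d) ≤ tanh d := by nlinarith
  nlinarith

open Real in
theorem tanh_dn {z d ε : ℝ} (h0 : -ε ≤ d) (he : 0 ≤ ε) (h1 : ε ≤ 1/2) :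
    -(2 * ε) * (1 - tanh z ^ 2) ≤ tanh (z + d) - tanh z := by
  obtain ⟨hp, e⟩ := tanh_shift z d
  have h2 : -ε ≤ tanh d := by
    have a1 := tanh_mono' h0
    have a2 := tanh_lip (x := -ε) (y := 0) (by linarith)
    rw [tanh_zero] at a2; linarith
  have h4 := tanh_lt_one z
  have h5 := neg_one_lt_tanh z
  have h6 := tanh_sq_lt_one z
  rw [e, le_div_iff₀ hp]
  have h8 : -(2 * ε) * (1 + tanh z * tanh d) ≤ tanh d := by
    rcases le_total 0 (tanh d) with h | h
    · nlinarith
    · have : 1/2 ≤ 1 + tanh z * tanh d := by nlinarith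
      nlinarith
  nlinarith

open Real in
set_option maxHeartbeats 1000000 in
theorem core_s10 (η q x0 x1 x2 x3 x4 y0 y1 y2 y3 y4 : ℝ) (hη : 0 < η) (hq1 : q ≤ 1)
    (hqη : 1000 * η ≤ q)
    (hx2 : x2 = x1 - η * tanh y1 - η / 2 * tanh y0)
    (hy2 : y2 = y1 + η * tanh x1 + η / 2 * tanh x0)
    (hx3 : x3 = x2 + η * tanh y2 + η / 2 * tanh y1)
    (hy3 : y3 = y2 - η * tanh x2 - η / 2 * tanh x1)
    (hx4 : x4 = x3 - η * tanh y3 - η / 2 * tanh y2)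
    (hy4 : y4 = y3 + η * tanh x3 + η / 2 * tanh x2)
    (bx : |x1 - x0| ≤ 3/2 * η) (by' : |y1 - y0| ≤ 3/2 * η)
    (qx0 : q ≤ tanh x0) (qx1 : q ≤ tanh x1) (qx2 : q ≤ tanh x2)
    (qy0 : q ≤ tanh y0) (qy1 : q ≤ tanh y1) (qy2 : q ≤ tanh y2)
    (qy3 : q ≤ tanh y3) :
    18/100 * η^2 * q * (1 - tanh y2 ^ 2) ≤ x4 - x2 ∧
    18/100 * η^2 * q * (1 - tanh x2 ^ 2) ≤ y4 - y2 := by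
  have pm : ∀ {u v : ℝ}, u ≤ v → η * u ≤ η * v := fun h => mul_le_mul_of_nonneg_left h hη.le
  have hq0 : 0 < q := by linarith
  have hηq : 0 < η * q := mul_pos hη hq0
  have hη1 : η ≤ 1/1000 := by linarith
  have hηη : η * (1000 * η) ≤ η * q := pm hqη
  have px0 := pm qx0
  have px1 := pm qx1
  have px2 := pm qx2
  have py0 := pm qy0
  have py1 := pm qy1
  have py2 := pm qy2
  have bx0 := (abs_le.1 ((tanh_abs_lip x1 x0).trans bx))
  have by0 := (abs_le.1 ((tanh_abs_lip y1 y0).trans by'))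
  have lx0 := tanh_lt_one x0
  have lx1 := tanh_lt_one x1
  have lx2 := tanh_lt_one x2
  have ly0 := tanh_lt_one y0
  have ly1 := tanh_lt_one y1
  have ly2 := tanh_lt_one y2
  have rx0 := pm lx0.le
  have rx1 := pm lx1.le
  have rx2 := pm lx2.le
  have ry0 := pm ly0.le
  have ry1 := pm ly1.le
  have ry2 := pm ly2.le
  have sy2 := tanh_sq_lt_one y2
  have sx2 := tanh_sq_lt_one x2
  have bx1 := abs_le.1 ((tanh_abs_lip x2 x1).trans (c := 3/2 * η)
    (abs_le.2 ⟨by linarith, by linarith⟩))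
  have by1 := abs_le.1 ((tanh_abs_lip y2 y1).trans (c := 3/2 * η)
    (abs_le.2 ⟨by linarith, by linarith⟩))
  have ex0 := pm bx0.2
  have ex0' := pm bx0.1
  have ex1 := pm bx1.2
  have ex1' := pm bx1.1
  have ey0 := pm by0.2
  have ey0' := pm by0.1
  have ey1 := pm by1.2
  have ey1' := pm by1.1
  have he1 : 9/4 * η^2 ≤ 1/2 := by
    have : η * η ≤ η * 1 := pm (by linarith)
    linarith
  have hd : ∀ u, 3/2 * η * q ≤ u → 37/100 * η * q ≤ u / 4 - 2 * (9/4 * η^2) := by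
    intro u hu; linarith
  constructor
  · have g1 := tanh_up (z := y3) (d := η * tanh x2 + η / 2 * tanh x1) (by linarith) (by linarith)
    have g2 := tanh_dn (z := y3) (d := y1 - y3) (ε := 9/4 * η^2)
      (by linarith) (by positivity) he1
    rw [show y3 + (η * tanh x2 + η / 2 * tanh x1) = y2 by linarith] at g1
    rw [show y3 + (y1 - y3) = y1 by ring] at g2
    have g3 := hd (η * tanh x2 + η / 2 * tanh x1) (by linarith)
    have m : tanh y3 ≤ tanh y2 := tanh_mono' (by linarith)
    have m2 : 1 - tanh y2 ^ 2 ≤ 1 - tanh y3 ^ 2 := by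
      have : tanh y3 ^ 2 ≤ tanh y2 ^ 2 := pow_le_pow_left₀ (by linarith) m 2
      linarith
    have g4 : 37/100 * η * q * (1 - tanh y2 ^ 2) ≤ (tanh y2 - tanh y3) + (tanh y1 - tanh y3) := by
      have := mul_le_mul g3 m2 (by linarith) (le_trans (by positivity) g3)
      linarith
    have g5 := mul_le_mul_of_nonneg_left g4 (by linarith : 0 ≤ η / 2)
    have g6 : 0 ≤ η^2 * q * (1 - tanh y2 ^ 2) :=
      mul_nonneg (mul_nonneg (by positivity) (by linarith)) (by linarith)
    linarith
  · have g1 := tanh_up (z := x2) (d := η * tanh y2 + η / 2 * tanh y1) (by linarith) (by linarith)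
    have g2 := tanh_dn (z := -x3) (d := x3 - x1) (ε := 9/4 * η^2)
      (by linarith) (by positivity) he1
    rw [show x2 + (η * tanh y2 + η / 2 * tanh y1) = x3 by linarith] at g1
    rw [show -x3 + (x3 - x1) = -x1 by ring, tanh_neg, tanh_neg, neg_sq] at g2
    have g3 := hd (η * tanh y2 + η / 2 * tanh y1) (by linarith)
    have m : tanh x2 ≤ tanh x3 := tanh_mono' (by linarith)
    have m2 : 1 - tanh x3 ^ 2 ≤ 1 - tanh x2 ^ 2 := by
      have : tanh x2 ^ 2 ≤ tanh x3 ^ 2 := pow_le_pow_left₀ (by linarith) m 2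
      linarith
    have g4 : 37/100 * η * q * (1 - tanh x2 ^ 2) ≤ (tanh x3 - tanh x2) + (tanh x3 - tanh x1) := by
      have a1 := mul_le_mul_of_nonneg_right g3 (by linarith : 0 ≤ 1 - tanh x2 ^ 2)
      have a2 := mul_le_mul_of_nonneg_left m2 (by positivity : 0 ≤ 2 * (9/4 * η^2))
      linarith
    have g5 := mul_le_mul_of_nonneg_left g4 (by linarith : 0 ≤ η / 2)
    have g6 : 0 ≤ η^2 * q * (1 - tanh x2 ^ 2) :=
      mul_nonneg (mul_nonneg (by positivity) (by linarith)) (by linarith)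
    linarith

open Real in
theorem update_logit {a α β : ℝ} (h0 : 0 < a) (h1 : a < 1) :
    artanh (1 - 2 * (a * exp α / (a * exp α + (1 - a) * exp β)))
      = artanh (1 - 2 * a) - (α - β) / 2 := by
  have hA : 0 < a * exp α := by positivity
  have hB : 0 < (1 - a) * exp β := mul_pos (by linarith) (exp_pos _)
  have h1a : 0 < 1 - a := by linarith
  set A := a * exp α with hAd
  set B := (1 - a) * exp β with hBd
  have hf0 : 0 < A / (A + B) := by positivity
  have hf1 : A / (A + B) < 1 := by rw [div_lt_one (by positivity)]; linarith
  rw [artanh_eq_half_log ⟨by linarith, by linarith⟩, artanh_eq_half_log ⟨by linarith, by linarith⟩]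
  have e1 : (1 + (1 - 2 * (A / (A + B)))) / (1 - (1 - 2 * (A / (A + B)))) = B / A := by
    field_simp; ring
  have e2 : (1 + (1 - 2 * a)) / (1 - (1 - 2 * a)) = (1 - a) / a := by
    field_simp; ring
  rw [e1, e2, log_div hB.ne' hA.ne', log_div h1a.ne' h0.ne', hAd, hBd,
    log_mul h1a.ne' (exp_pos _).ne', log_mul h0.ne' (exp_pos _).ne', log_exp, log_exp]
  ring

open Real in
theorem KLhalf_eq {a : ℝ} (h0 : 0 < a) (h1 : a < 1) :
    KLhalf a = log (cosh (artanh (1 - 2 * a))) := by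
  have h1a : 0 < 1 - a := by linarith
  rw [cosh_artanh ⟨by linarith, by linarith⟩, one_div, log_inv, log_sqrt (by nlinarith), KLhalf,
    one_div (2 * a), one_div (2 * (1 - a)), log_inv, log_inv, show 1 - (1 - 2 * a)^2 = (2 * a) * (2 * (1 - a)) by ring,
    log_mul (x := 2 * a) (y := 2 * (1 - a)) (by positivity) (by positivity)]
  ring

open Real in
theorem logcosh_convex (x d : ℝ) : tanh x * (d - x) ≤ log (cosh d) - log (cosh x) := by
  obtain ⟨e, rfl⟩ : ∃ e, d = x + e := ⟨d - x, by ring⟩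
  rw [← log_div (cosh_pos _).ne' (cosh_pos _).ne', le_log_iff_exp_le (by positivity)]
  have e1 : cosh (x + e) / cosh x = (1 + tanh x) / 2 * exp e + (1 - tanh x) / 2 * exp (-e) := by
    rw [cosh_add, tanh_eq_sinh_div_cosh]
    have := (cosh_pos x).ne'
    rw [cosh_eq e, sinh_eq e]; field_simp; ring
  have h4 := tanh_lt_one x
  have h5 := neg_one_lt_tanh x
  have := convexOn_exp.2 (Set.mem_univ e) (Set.mem_univ (-e))
    (by linarith : 0 ≤ (1 + tanh x) / 2) (by linarith : 0 ≤ (1 - tanh x) / 2) (by ring)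
  simp only [smul_eq_mul] at this
  rw [e1]
  refine le_trans (le_of_eq ?_) this
  congr 1
  ring

open Real in
set_option maxHeartbeats 1000000 in
theorem omwu_kl_increasing
    (η : ℝ) (hη : 0 < η) (a b : ℤ → ℝ) (h : OMWU η a b)
    (p : ℝ) (hp : 0 < p) (hp4 : p < 1/4) (hpη : 16 * Real.sqrt η ≤ p)
    (ha0 : 1 - a 0 ≥ 1/2 + 2*p) (hb0 : 1 - b 0 ≥ 1/2 + 2*p)
    (t : ℤ) (ht : 3 ≤ t)
    (hbd : ∀ k : ℤ, -1 ≤ k → k < t →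
      1 - a k ≤ 1 - Real.sqrt η ∧ 1 - b k ≤ 1 - Real.sqrt η) :
    (KLhalf (a (t+2)) + KLhalf (b (t+2))) - (KLhalf (a t) + KLhalf (b t)) ≥
      (3/4) * p^2 * η^3 := by
  obtain ⟨hab, hev, hod⟩ := h
  obtain ⟨x, hx⟩ : ∃ x : ℤ → ℝ, ∀ k, x k = artanh (1 - 2 * a k) := ⟨_, fun _ => rfl⟩
  obtain ⟨y, hy⟩ : ∃ y : ℤ → ℝ, ∀ k, y k = artanh (1 - 2 * b k) := ⟨_, fun _ => rfl⟩
  have tx : ∀ k, -1 ≤ k → tanh (x k) = 1 - 2 * a k := by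
    intro k hk
    have := (hab k hk).1
    rw [hx, tanh_artanh ⟨by linarith, by linarith⟩]
  have ty : ∀ k, -1 ≤ k → tanh (y k) = 1 - 2 * b k := by
    intro k hk
    have := (hab k hk).2
    rw [hy, tanh_artanh ⟨by linarith, by linarith⟩]
  have sev : ∀ k, 0 ≤ k → Even k →
      x (k+1) = x k + η * tanh (y k) + η / 2 * tanh (y (k-1)) ∧
      y (k+1) = y k - η * tanh (x k) - η / 2 * tanh (x (k-1)) := by
    intro k hk he
    obtain ⟨h1, h2⟩ := hev k hk he
    have h3 := hab k (by omega)
    rw [tx k (by omega), tx (k-1) (by omega), ty k (by omega), ty (k-1) (by omega),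
      hx, hy, hx, hy, h1, h2, update_logit h3.1.1 h3.1.2, update_logit h3.2.1 h3.2.2]
    constructor <;> ring
  have sod : ∀ k, 0 ≤ k → Odd k →
      x (k+1) = x k - η * tanh (y k) - η / 2 * tanh (y (k-1)) ∧
      y (k+1) = y k + η * tanh (x k) + η / 2 * tanh (x (k-1)) := by
    intro k hk he
    obtain ⟨h1, h2⟩ := hod k hk he
    have h3 := hab k (by omega)
    rw [tx k (by omega), tx (k-1) (by omega), ty k (by omega), ty (k-1) (by omega),
      hx, hy, hx, hy, h1, h2, update_logit h3.1.1 h3.1.2, update_logit h3.2.1 h3.2.2]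
    constructor <;> ring
  have stp : ∀ k, 0 ≤ k → |x (k+1) - x k| ≤ 3/2 * η ∧ |y (k+1) - y k| ≤ 3/2 * η := by
    intro k hk
    have a1 := tanh_lt_one (x k)
    have a2 := tanh_lt_one (x (k-1))
    have a3 := tanh_lt_one (y k)
    have a4 := tanh_lt_one (y (k-1))
    have b1 := neg_one_lt_tanh (x k)
    have b2 := neg_one_lt_tanh (x (k-1))
    have b3 := neg_one_lt_tanh (y k)
    have b4 := neg_one_lt_tanh (y (k-1))
    have c1 := mul_le_mul_of_nonneg_left a1.le hη.le
    have d1 := mul_le_mul_of_nonneg_left b1.le hη.le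
    have c2 := mul_le_mul_of_nonneg_left a2.le hη.le
    have d2 := mul_le_mul_of_nonneg_left b2.le hη.le
    have c3 := mul_le_mul_of_nonneg_left a3.le hη.le
    have d3 := mul_le_mul_of_nonneg_left b3.le hη.le
    have c4 := mul_le_mul_of_nonneg_left a4.le hη.le
    have d4 := mul_le_mul_of_nonneg_left b4.le hη.le
    rcases Int.even_or_odd k with he | ho
    · obtain ⟨h1, h2⟩ := sev k hk he
      rw [h1, h2, abs_le, abs_le]
      refine ⟨⟨?_, ?_⟩, ?_, ?_⟩ <;> linarith
    · obtain ⟨h1, h2⟩ := sod k hk ho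
      rw [h1, h2, abs_le, abs_le]
      refine ⟨⟨?_, ?_⟩, ?_, ?_⟩ <;> linarith
  set s := √η with hs
  have hs0 : 0 < s := sqrt_pos.2 hη
  have hss : s * s = η := mul_self_sqrt hη.le
  have hηp : 1024 * η ≤ p := by nlinarith
  have two : ∀ k, 2 ≤ k → (∀ j, k - 2 ≤ j → j ≤ k + 1 → 3/2 * p ≤ tanh (x j) ∧ 3/2 * p ≤ tanh (y j)) →
      18/100 * η^2 * (3/2*p) * (1 - tanh (y k) ^ 2) ≤ x (k+2) - x k ∧
      18/100 * η^2 * (3/2*p) * (1 - tanh (x k) ^ 2) ≤ y (k+2) - y k := by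
    intro k hk H
    have s0 := stp (k-2) (by omega)
    rw [show k - 2 + 1 = k - 1 by ring] at s0
    have q0 := H (k-2) (by omega) (by omega)
    have q1 := H (k-1) (by omega) (by omega)
    have q2 := H k (by omega) (by omega)
    have q3 := H (k+1) (by omega) (by omega)
    rcases Int.even_or_odd k with he | ho
    · have e1 := sod (k-1) (by omega) (by grind)
      have e2 := sev k (by omega) he
      have e3 := sod (k+1) (by omega) (by grind)
      rw [show k - 1 + 1 = k by ring, show k - 1 - 1 = k - 2 by ring] at e1
      rw [show k + 1 + 1 = k + 2 by ring, show k + 1 - 1 = k by ring] at e3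
      exact core_s10 η _ _ _ _ _ _ _ _ _ _ _ hη (by linarith) (by linarith) e1.1 e1.2 e2.1 e2.2 e3.1 e3.2
        s0.1 s0.2 q0.1 q1.1 q2.1 q0.2 q1.2 q2.2 q3.2
    · have e1 := sev (k-1) (by omega) (by grind)
      have e2 := sod k (by omega) ho
      have e3 := sev (k+1) (by omega) (by grind)
      rw [show k - 1 + 1 = k by ring, show k - 1 - 1 = k - 2 by ring] at e1
      rw [show k + 1 + 1 = k + 2 by ring, show k + 1 - 1 = k by ring] at e3
      exact (core_s10 η _ _ _ _ _ _ _ _ _ _ _ hη (by linarith) (by linarith) e1.2 e1.1 e2.2 e2.1 e3.2 e3.1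
        s0.2 s0.1 q0.2 q1.2 q2.2 q0.1 q1.1 q2.1 q3.1).symm
  have toT : ∀ z, 3 * p ≤ z → 3/2 * p ≤ tanh z := by
    intro z hz
    have := tanh_half_le (d := 3 * p) (by linarith) (by linarith)
    have := tanh_mono' hz
    linarith
  have x0 : 4 * p ≤ x 0 ∧ 4 * p ≤ y 0 := by
    have fromT : ∀ z, 4 * p ≤ tanh z → 4 * p ≤ z := by
      intro z hz
      by_contra hc
      rcases le_total 0 z with h | h
      · have := tanh_lip h
        rw [tanh_zero] at this; linarith
      · have := tanh_mono' h
        rw [tanh_zero] at this; linarith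
    constructor <;> apply fromT
    · rw [tx 0 (by omega)]; linarith
    · rw [ty 0 (by omega)]; linarith
  have inv : ∀ n : ℕ, 3 * p ≤ x n ∧ 3 * p ≤ y n := by
    intro n
    induction n using Nat.strong_induction_on with
    | _ n ih =>
    have t0 := stp 0 (by omega)
    have t1 := stp 1 (by omega)
    have t2 := stp 2 (by omega)
    norm_num [abs_le] at t0 t1 t2
    match n, ih with
    | 0, _ => norm_num; constructor <;> linarith
    | 1, _ => norm_num; constructor <;> linarith
    | 2, _ => norm_num; constructor <;> linarith
    | 3, _ => norm_num; constructor <;> linarith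
    | m + 4, ih =>
      have r := two ((m + 2 : ℕ) : ℤ) (by push_cast; omega) (by
        intro j h1 h2
        obtain ⟨i, rfl⟩ := Int.eq_ofNat_of_zero_le (show 0 ≤ j by push_cast at h1; omega)
        have := ih i (by push_cast at h2; omega)
        exact ⟨toT _ this.1, toT _ this.2⟩)
      rw [show ((m + 2 : ℕ) : ℤ) + 2 = ((m + 4 : ℕ) : ℤ) by push_cast; ring] at r
      have i2 := ih (m+2) (by omega)
      have u1 : 0 ≤ 1 - tanh (x (m+2 : ℕ)) ^ 2 := by linarith [tanh_sq_lt_one (x (m+2 : ℕ))]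
      have u2 : 0 ≤ 1 - tanh (y (m+2 : ℕ)) ^ 2 := by linarith [tanh_sq_lt_one (y (m+2 : ℕ))]
      have v1 : 0 ≤ 18/100 * η^2 * (3/2*p) * (1 - tanh (x (m+2 : ℕ)) ^ 2) := by positivity
      have v2 : 0 ≤ 18/100 * η^2 * (3/2*p) * (1 - tanh (y (m+2 : ℕ)) ^ 2) := by positivity
      constructor <;> linarith
  have invT : ∀ j : ℤ, 0 ≤ j → 3/2 * p ≤ tanh (x j) ∧ 3/2 * p ≤ tanh (y j) := by
    intro j hj
    obtain ⟨i, rfl⟩ := Int.eq_ofNat_of_zero_le hj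
    exact ⟨toT _ (inv i).1, toT _ (inv i).2⟩
  obtain ⟨f1, f2⟩ := two t (by omega) (fun j h1 _ => invT j (by omega))
  obtain ⟨T1, T2⟩ := invT t (by omega)
  have Bd := hbd (t-1) (by omega) (by omega)
  have st := stp (t-1) (by omega)
  rw [show t - 1 + 1 = t by ring] at st
  have ux := (abs_le.1 ((tanh_abs_lip _ _).trans st.1)).2
  have uy := (abs_le.1 ((tanh_abs_lip _ _).trans st.2)).2
  rw [tx (t-1) (by omega)] at ux
  rw [ty (t-1) (by omega)] at uy
  have s64 : 64 * η ≤ s := by nlinarith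
  have w : ∀ z, 3/2 * p ≤ tanh z → tanh z ≤ 1 - 2 * s + 3/2 * η → 64 * η ≤ 1 - tanh z ^ 2 := by
    intro z h1 h2
    have : tanh z * tanh z ≤ tanh z * 1 :=
      mul_le_mul_of_nonneg_left (tanh_lt_one z).le (by linarith)
    nlinarith
  have wx := w _ T1 (by linarith)
  have wy := w _ T2 (by linarith)
  have gx := logcosh_convex (x t) (x (t+2))
  have gy := logcosh_convex (y t) (y (t+2))
  have k1 := (hab t (by omega))
  have k2 := (hab (t+2) (by omega))
  rw [KLhalf_eq k1.1.1 k1.1.2, KLhalf_eq k1.2.1 k1.2.2, KLhalf_eq k2.1.1 k2.1.2,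
    KLhalf_eq k2.2.1 k2.2.2, ← hx, ← hx, ← hy, ← hy]
  have fin : ∀ A d W, 3/2 * p ≤ A → 18/100 * η^2 * (3/2*p) * W ≤ d → 64 * η ≤ W →
      3/4 * p^2 * η^3 ≤ A * d := by
    intro A d W hA hd hW
    have c1 : 18/100 * η^2 * (3/2*p) * (64 * η) ≤ 18/100 * η^2 * (3/2*p) * W :=
      mul_le_mul_of_nonneg_left hW (by positivity)
    have c2 : 3/2 * p * (18/100 * η^2 * (3/2*p) * (64 * η)) ≤ A * d :=
      mul_le_mul hA (c1.trans hd) (by positivity) (by linarith)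
    have c3 : 0 ≤ p^2 * η^3 := by positivity
    linarith
  have z1 := fin _ _ _ T1 f1 wy
  have z2 := fin _ _ _ T2 f2 wx
  have z3 : 0 ≤ p^2 * η^3 := by positivity
  linarith
end
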